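/- arXiv:2502.20262 — 2 statements merged into one kernel-verified Lean document; each statement's English description precedes it below -/
import Mathlib

section
/- Let α be a transition rate function on [d] in (D-Lip). Suppose that for all x, y ∈ [d] with x ≠ y and all μ ∈ S_d, Σ_{z,w ∈ [d]} μ_z D^m_{wx} α_{zy}(μ) μ_w > − α_{xy}(μ). Then α satisfies (Erg); in particular the associated nonlinear Markov chain is exponentially ergodic. -/
/-!
The Kolmogorov field `b(μ) = μ α(μ)` has, in zero-sum directions `q`, the derivative `q A(μ)` with
`A_{xy} = α_{xy} + ∑_z μ_z (δα_{zy}/δm)(μ, x)` (`linMat`). Averaging `D^m_{wx}` over `w` under `μ`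
gives `δ/δm (·, x)`, because the linear functional derivative is centred under `μ`. Hence the
hypothesis says that the off-diagonal entries of `A` are positive. By compactness of the simplex
they are at least some `κ > 0`, and the rows of `A` sum to zero because those of `α` do. Such a
matrix dissipates the ℓ¹ norm of zero-sum vectors at rate `d κ` (`rate_dissip`).

Using this along the segment between two solutions gives the exponential contraction of the flow
with `c₁ = 1` (`DissipField.contract`). The difference quotients of the flow in the direction of a
vertex solve the linearized equation up to an error of order `ε`. Grönwall's inequality in ℓ¹,
applied to the difference of two of them, shows both that they converge as `ε → 0` and that their
limits are Lipschitz in the initial measure, uniformly in time (`DissipField.quot_sub_le`). In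
this way no existence theorem for the linearized equation is needed.

The differential calculus behind this is a second-order Taylor estimate for (D-Lip) functions
(`DLipR.taylor`). The definition only provides one-sided derivatives towards the vertices. These
are combined into derivatives towards an arbitrary point by a convexity argument (`DLipR.expand`),
and then integrated along segments.
-/

open Finset Filter Topology

/-- The simplex of probability vectors on `Fin d`. -/
def simplex (d : ℕ) : Set (Fin d → ℝ) :=
  {μ | (∀ z, 0 ≤ μ z) ∧ ∑ z, μ z = 1}

/-- The ℓ¹ norm on `Fin d → ℝ`. -/
def l1 {d : ℕ} (v : Fin d → ℝ) : ℝ := ∑ z, |v z|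

/-- The `z`-th standard basis vector (Dirac measure at `z`). -/
def bvec {d : ℕ} (z : Fin d) : Fin d → ℝ := fun y => if y = z then 1 else 0

/-- Linear functional derivative: `δF/δm (μ, z) = v`. -/
def HasLFDerivAt {d : ℕ} (F : (Fin d → ℝ) → ℝ) (μ : Fin d → ℝ) (z : Fin d) (v : ℝ) : Prop :=
  Filter.Tendsto (fun ε : ℝ => (F ((1 - ε) • μ + ε • bvec z) - F μ) / ε)
    (nhdsWithin 0 (Set.Ioi 0)) (nhds v)

/-- Directional derivative `D^m_{yz} F (μ) = v`. -/
def HasDmDerivAt {d : ℕ} (F : (Fin d → ℝ) → ℝ) (μ : Fin d → ℝ) (y z : Fin d) (v : ℝ) : Prop :=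
  Filter.Tendsto (fun ε : ℝ => (F (μ + ε • (bvec z - bvec y)) - F μ) / ε)
    (nhdsWithin 0 (Set.Ioi 0)) (nhds v)

/-- `α` is a transition rate function on `[d]`. -/
def IsRate (d : ℕ) (α : (Fin d → ℝ) → Matrix (Fin d) (Fin d) ℝ) : Prop :=
  ContinuousOn α (simplex d) ∧
  (∀ μ ∈ simplex d, ∀ x y, x ≠ y → 0 ≤ α μ x y) ∧
  (∀ μ ∈ simplex d, ∀ x, ∑ y, α μ x y = 0)

/-- `m` is the measure flow solving the nonlinear Kolmogorov equation for `α`. -/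
def IsFlow {d : ℕ} (α : (Fin d → ℝ) → Matrix (Fin d) (Fin d) ℝ)
    (m : ℝ → (Fin d → ℝ) → Fin d → ℝ) : Prop :=
  ∀ μ ∈ simplex d, m 0 μ = μ ∧ (∀ t, 0 ≤ t → m t μ ∈ simplex d) ∧
    ∀ t, 0 ≤ t → HasDerivAt (fun s => m s μ) (Matrix.vecMul (m t μ) (α (m t μ))) t

/-- A real-valued function on the simplex is in (D-Lip) with linear functional derivative `δF`. -/
def DLipR {d : ℕ} (F : (Fin d → ℝ) → ℝ) (δF : (Fin d → ℝ) → Fin d → ℝ) : Prop :=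
  (∃ K : ℝ, ∀ μ ∈ simplex d, ∀ ν ∈ simplex d, |F μ - F ν| ≤ K * l1 (μ - ν)) ∧
  (∀ μ ∈ simplex d, ∀ z, HasLFDerivAt F μ z (δF μ z)) ∧
  (∃ K : ℝ, ∀ μ ∈ simplex d, ∀ ν ∈ simplex d, l1 (δF μ - δF ν) ≤ K * l1 (μ - ν))

/-- The matrix-valued transition rate function is in (D-Lip), componentwise. -/
def DLipRate {d : ℕ} (α : (Fin d → ℝ) → Matrix (Fin d) (Fin d) ℝ)
    (δα : (Fin d → ℝ) → Fin d → Matrix (Fin d) (Fin d) ℝ) : Prop :=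
  ∀ x y, DLipR (fun μ => α μ x y) (fun μ z => δα μ z x y)

/-- The ergodicity assumption (Erg) for the flow `m`, with derivative data `δm`. -/
def Erg {d : ℕ} (m : ℝ → (Fin d → ℝ) → Fin d → ℝ)
    (δm : ℝ → (Fin d → ℝ) → Fin d → Fin d → ℝ) (lam c₁ k₁ : ℝ) : Prop :=
  0 < lam ∧ 0 < c₁ ∧ 0 < k₁ ∧
  (∀ t, 0 ≤ t → ∀ μ ∈ simplex d, ∀ μ' ∈ simplex d,
    l1 (m t μ - m t μ') ≤ c₁ * Real.exp (-lam * t) * l1 (μ - μ')) ∧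
  (∀ t, 0 ≤ t → ∀ μ ∈ simplex d, ∀ z x, HasLFDerivAt (fun ν => m t ν x) μ z (δm t μ z x)) ∧
  (∀ t, 0 ≤ t → ∀ μ ∈ simplex d, ∀ μ' ∈ simplex d, ∀ z,
    l1 (δm t μ z - δm t μ' z) ≤ k₁ * l1 (μ - μ'))

/-- Empirical measure of a configuration of `N` particles. -/
noncomputable def empMeas {d N : ℕ} (x : Fin N → Fin d) : Fin d → ℝ :=
  fun z => (∑ i, if x i = z then (1 : ℝ) else 0) / N

/-- Generator of the `N`-particle Markov chain. -/
noncomputable def genQ {d N : ℕ} (α : (Fin d → ℝ) → Matrix (Fin d) (Fin d) ℝ)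
    (F : (Fin N → Fin d) → ℝ) (x : Fin N → Fin d) : ℝ :=
  ∑ i, ∑ y ∈ Finset.univ.filter (fun y => y ≠ x i),
    α (empMeas x) (x i) y * (F (Function.update x i y) - F x)

/-- `p` is the law of the `N`-particle chain: a curve of probability vectors solving the
forward Kolmogorov equation (in weak form, tested against all functions). -/
def IsLaw {d N : ℕ} (α : (Fin d → ℝ) → Matrix (Fin d) (Fin d) ℝ)
    (p : ℝ → (Fin N → Fin d) → ℝ) : Prop :=
  (∀ t, 0 ≤ t → (∀ x, 0 ≤ p t x) ∧ (∑ x, p t x) = 1) ∧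
  (∀ F : (Fin N → Fin d) → ℝ, ∀ t, 0 ≤ t →
    HasDerivAt (fun s => ∑ x, p s x * F x) (∑ x, p t x * genQ α F x) t)

/-- The linearized Kolmogorov operator `L_η`. -/
def linOp {d : ℕ} (α : (Fin d → ℝ) → Matrix (Fin d) (Fin d) ℝ)
    (δα : (Fin d → ℝ) → Fin d → Matrix (Fin d) (Fin d) ℝ)
    (η q : Fin d → ℝ) : Fin d → ℝ :=
  Matrix.vecMul η (∑ z, q z • δα η z) + Matrix.vecMul q (α η)

/-- The linearized ergodicity assumption (Lin-Erg) with constants `lam`, `c₂`. -/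
def LinErg {d : ℕ} (α : (Fin d → ℝ) → Matrix (Fin d) (Fin d) ℝ)
    (δα : (Fin d → ℝ) → Fin d → Matrix (Fin d) (Fin d) ℝ)
    (m : ℝ → (Fin d → ℝ) → Fin d → ℝ) (lam c₂ : ℝ) : Prop :=
  ∀ μ ∈ simplex d, ∀ q₀ : Fin d → ℝ, (∑ z, q₀ z) = 0 →
    ∀ r : ℝ → Fin d → ℝ, Measurable r → (∃ Cb : ℝ, ∀ t, 0 ≤ t → l1 (r t) ≤ Cb) →
      (∀ t, 0 ≤ t → (∑ z, r t z) = 0) →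
      ∀ q : ℝ → Fin d → ℝ, q 0 = q₀ →
        (∀ t, 0 ≤ t → HasDerivAt q (linOp α δα (m t μ) (q t) + r t) t) →
        ∀ t, 0 ≤ t →
          l1 (q t) ≤ c₂ * (Real.exp (-lam * t) * l1 q₀ +
            ∫ s in (0:ℝ)..t, Real.exp (-lam * (t - s)) * l1 (r s))

/-! ### The ℓ¹ norm and the simplex -/

section L1

variable {d : ℕ}

lemma l1_nonneg (v : Fin d → ℝ) : 0 ≤ l1 v := Finset.sum_nonneg fun _ _ => abs_nonneg _

lemma abs_le_l1 (v : Fin d → ℝ) (x : Fin d) : |v x| ≤ l1 v :=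
  Finset.single_le_sum (f := fun z => |v z|) (fun _ _ => abs_nonneg _) (Finset.mem_univ x)

lemma l1_add_le (u v : Fin d → ℝ) : l1 (u + v) ≤ l1 u + l1 v := by
  unfold l1
  rw [← Finset.sum_add_distrib]
  exact Finset.sum_le_sum fun z _ => abs_add_le _ _

lemma l1_smul (c : ℝ) (v : Fin d → ℝ) : l1 (c • v) = |c| * l1 v := by
  simp [l1, Finset.mul_sum, abs_mul]

lemma l1_sub_comm (u v : Fin d → ℝ) : l1 (u - v) = l1 (v - u) := by
  simp [l1, abs_sub_comm]

@[simp] lemma l1_zero : l1 (0 : Fin d → ℝ) = 0 := by simp [l1]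

lemma continuous_l1 : Continuous (l1 : (Fin d → ℝ) → ℝ) := by
  unfold l1; fun_prop

lemma sum_mul_le_mul_l1 (σ v : Fin d → ℝ) {M : ℝ} (hσ : ∀ y, |σ y| ≤ M) :
    |∑ y, σ y * v y| ≤ M * l1 v := by
  refine (Finset.abs_sum_le_sum_abs _ _).trans ?_
  unfold l1
  rw [Finset.mul_sum]
  refine Finset.sum_le_sum fun y _ => ?_
  rw [abs_mul]
  exact mul_le_mul_of_nonneg_right (hσ y) (abs_nonneg _)

lemma sum_mul_le_l1 (σ v : Fin d → ℝ) (hσ : ∀ y, |σ y| ≤ 1) : ∑ y, σ y * v y ≤ l1 v := by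
  have := (abs_le.1 (sum_mul_le_mul_l1 σ v hσ)).2
  linarith

lemma bvec_mem (z : Fin d) : bvec z ∈ simplex d := by
  refine ⟨fun y => ?_, by simp [bvec]⟩
  unfold bvec; split_ifs <;> norm_num

lemma seg_mem {μ ν : Fin d → ℝ} (hμ : μ ∈ simplex d) (hν : ν ∈ simplex d) {s : ℝ}
    (h0 : 0 ≤ s) (h1 : s ≤ 1) : (1 - s) • μ + s • ν ∈ simplex d := by
  refine ⟨fun z => ?_, ?_⟩
  · have := mul_nonneg (sub_nonneg.2 h1) (hμ.1 z)
    have := mul_nonneg h0 (hν.1 z)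
    simp only [Pi.add_apply, Pi.smul_apply, smul_eq_mul]; linarith
  · simp only [Pi.add_apply, Pi.smul_apply, smul_eq_mul, Finset.sum_add_distrib,
      ← Finset.mul_sum, hμ.2, hν.2]; ring

lemma l1_sub_le_two {μ ν : Fin d → ℝ} (hμ : μ ∈ simplex d) (hν : ν ∈ simplex d) :
    l1 (μ - ν) ≤ 2 := by
  have : l1 (μ - ν) ≤ ∑ z, (μ z + ν z) := Finset.sum_le_sum fun z _ => by
    have h1 := hμ.1 z
    have h2 := hν.1 z
    simp only [Pi.sub_apply]
    rw [abs_le]; constructor <;> linarith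
  rw [Finset.sum_add_distrib, hμ.2, hν.2] at this
  linarith

lemma sum_sub_eq_zero {μ ν : Fin d → ℝ} (hμ : μ ∈ simplex d) (hν : ν ∈ simplex d) :
    ∑ z, (μ - ν) z = 0 := by
  simp [hμ.2, hν.2]

lemma seg_sub_left (μ ν : Fin d → ℝ) (s : ℝ) : ((1 - s) • μ + s • ν) - μ = s • (ν - μ) := by
  ext z; simp; ring

end L1

/-! ### Dissipativity in ℓ¹ -/

section Dissip

variable {d : ℕ}

/-- Doeblin-type contraction: a rate matrix whose off-diagonal entries are all at least `κ`
dissipates the ℓ¹ norm of zero-sum vectors at rate `d * κ`. The vector `σ` is a subgradient of the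
ℓ¹ norm at `q`. Subtracting `κ` from every entry of `B` does not change `q B`, because `q` has
sum zero, and lowers the row sums from `0` to `-d * κ`. -/
lemma rate_dissip (B : Matrix (Fin d) (Fin d) ℝ) {κ : ℝ}
    (hB : ∀ x y, x ≠ y → κ ≤ B x y) (hrow : ∀ x, ∑ y, B x y = 0)
    (q σ : Fin d → ℝ) (hq : ∑ x, q x = 0) (hσ : ∀ y, |σ y| ≤ 1)
    (hσq : ∀ y, σ y * q y = |q y|) :
    ∑ y, σ y * Matrix.vecMul q B y ≤ -(d * κ) * l1 q := by
  have h1 : ∑ y, σ y * Matrix.vecMul q B y = ∑ x, ∑ y, (B x y - κ) * (σ y * q x) := by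
    have h2 : ∑ x, ∑ y, κ * (σ y * q x) = 0 := by
      have : ∑ x, ∑ y, κ * (σ y * q x) = κ * (∑ y, σ y) * ∑ x, q x := by
        rw [mul_assoc, Finset.sum_mul_sum, Finset.mul_sum, Finset.sum_comm]
        simp_rw [Finset.mul_sum]
      rw [this, hq, mul_zero]
    simp_rw [sub_mul, Finset.sum_sub_distrib]
    rw [h2, sub_zero, Finset.sum_comm]
    refine Finset.sum_congr rfl fun y _ => ?_
    rw [Matrix.vecMul, dotProduct, Finset.mul_sum]
    exact Finset.sum_congr rfl fun x _ => by ring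
  rw [h1]
  have h3 : -(d * κ) * l1 q = ∑ x, ∑ y, (B x y - κ) * |q x| := by
    unfold l1
    rw [Finset.mul_sum]
    refine Finset.sum_congr rfl fun x _ => ?_
    rw [← Finset.sum_mul, Finset.sum_sub_distrib, hrow]
    simp
  rw [h3]
  refine Finset.sum_le_sum fun x _ => Finset.sum_le_sum fun y _ => ?_
  by_cases hxy : x = y
  · subst hxy; rw [hσq]
  · refine mul_le_mul_of_nonneg_left ?_ (by linarith [hB x y hxy])
    calc σ y * q x ≤ |σ y * q x| := le_abs_self _
      _ = |σ y| * |q x| := abs_mul _ _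
      _ ≤ 1 * |q x| := mul_le_mul_of_nonneg_right (hσ y) (abs_nonneg _)
      _ = |q x| := one_mul _

/-- The absolute value of a differentiable function has a right derivative, given by a sign. -/
lemma abs_right_deriv {f : ℝ → ℝ} {f' t : ℝ} (hf : HasDerivAt f f' t) :
    ∃ s : ℝ, |s| ≤ 1 ∧ s * f t = |f t| ∧
      HasDerivWithinAt (fun r => |f r|) (s * f') (Set.Ici t) t := by
  rcases lt_trichotomy (f t) 0 with h | h | h
  · refine ⟨-1, by norm_num, by rw [abs_of_neg h]; ring, ?_⟩
    have := (hasDerivAt_abs_neg h).comp t hf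
    exact this.hasDerivWithinAt
  · -- At a zero of `f` the right slopes of `|f|` are the absolute values of those of `f`.
    refine ⟨SignType.sign f', ?_, by simp [h], ?_⟩
    · rcases lt_trichotomy f' 0 with h | h | h <;> simp [h]
    · rw [← hasDerivWithinAt_Ioi_iff_Ici, hasDerivWithinAt_iff_tendsto_slope' (by simp)]
      have h1 : Tendsto (slope f t) (𝓝[>] t) (𝓝 f') :=
        (hasDerivWithinAt_iff_tendsto_slope' (by simp)).1 hf.hasDerivWithinAt
      rw [sign_mul_self]
      refine h1.abs.congr' ?_
      filter_upwards [self_mem_nhdsWithin] with r hr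
      have hr : 0 < r - t := sub_pos.2 hr
      simp [slope_def_field, h, abs_div, abs_of_pos hr]
  · refine ⟨1, by norm_num, by rw [abs_of_pos h]; ring, ?_⟩
    have := (hasDerivAt_abs_pos h).comp t hf
    exact this.hasDerivWithinAt

/-- Grönwall's inequality for the ℓ¹ norm: the differential inequality only has to be checked
against the subgradients `σ` of the ℓ¹ norm. -/
lemma l1_gronwall {v v' : ℝ → Fin d → ℝ} {lam R : ℝ} (hlam : 0 < lam) (hR : 0 ≤ R)
    (hv : ∀ t, 0 ≤ t → HasDerivAt v (v' t) t)
    (h : ∀ t, 0 ≤ t → ∀ σ : Fin d → ℝ, (∀ y, |σ y| ≤ 1) → (∀ y, σ y * v t y = |v t y|) →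
      ∑ y, σ y * v' t y ≤ -lam * l1 (v t) + R) (t : ℝ) (ht : 0 ≤ t) :
    l1 (v t) ≤ Real.exp (-lam * t) * l1 (v 0) + R / lam := by
  have key : ∀ r, 0 ≤ r → ∃ f', f' ≤ -lam * l1 (v r) + R ∧
      HasDerivWithinAt (fun s => l1 (v s)) f' (Set.Ici r) r := by
    intro r hr
    have h1 := fun y => abs_right_deriv (hasDerivAt_pi.1 (hv r hr) y)
    choose σ hσ1 hσ2 hσ3 using h1
    exact ⟨_, h r hr σ hσ1 hσ2, HasDerivWithinAt.fun_sum fun y _ => hσ3 y⟩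
  choose! f' hf1 hf2 using key
  have hcont : ContinuousOn (fun s => l1 (v s)) (Set.Icc 0 t) := fun s hs =>
    (continuous_l1.continuousAt.comp (hv s hs.1).continuousAt).continuousWithinAt
  have := le_gronwallBound_of_liminf_deriv_right_le (f := fun s => l1 (v s)) (f' := f')
    (δ := l1 (v 0)) (K := -lam) (ε := R) hcont
    (fun x hx r hr => by
      simpa [slope_def_field, div_eq_inv_mul] using (hf2 x hx.1).liminf_right_slope_le hr)
    le_rfl (fun x hx => hf1 x hx.1) t ⟨ht, le_rfl⟩
  rw [gronwallBound_of_K_ne_0 (by linarith)] at this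
  simp only [sub_zero] at this
  have h2 : R / -lam * (Real.exp (-lam * t) - 1) = R / lam - R / lam * Real.exp (-lam * t) := by
    field_simp; ring
  have h3 : 0 ≤ R / lam * Real.exp (-lam * t) := by positivity
  rw [h2] at this
  linarith [mul_comm (l1 (v 0)) (Real.exp (-lam * t))]

/-- A function on `[0, 1]` with increments at most `D h + C h²` grows by at most `D`. -/
lemma increment_le {g : ℝ → ℝ} {D C : ℝ}
    (h : ∀ s s', 0 ≤ s → s ≤ s' → s' ≤ 1 → g s' - g s ≤ (s' - s) * D + C * (s' - s) ^ 2) :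
    g 1 - g 0 ≤ D := by
  have hn : ∀ n : ℕ, g 1 - g 0 ≤ D + C * (1 / ((n : ℝ) + 1)) := by
    intro n
    have hN : (0 : ℝ) < (n : ℝ) + 1 := by positivity
    have h1 := Finset.sum_range_sub (fun i : ℕ => g (i / ((n : ℝ) + 1))) (n + 1)
    simp only [Nat.cast_add, Nat.cast_one, Nat.cast_zero, zero_div, div_self hN.ne'] at h1
    rw [← h1]
    have h2 : ∀ i ∈ Finset.range (n + 1),
        g (((i : ℝ) + 1) / ((n : ℝ) + 1)) - g ((i : ℝ) / ((n : ℝ) + 1)) ≤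
          (1 / ((n : ℝ) + 1)) * D + C * (1 / ((n : ℝ) + 1)) ^ 2 := by
      intro i hi
      have hi' : (i : ℝ) + 1 ≤ (n : ℝ) + 1 := by exact_mod_cast Finset.mem_range.1 hi
      have := h (i / ((n : ℝ) + 1)) ((i + 1) / ((n : ℝ) + 1)) (by positivity) (by gcongr; linarith)
        (by rwa [div_le_one hN])
      have e : ((i : ℝ) + 1) / ((n : ℝ) + 1) - (i : ℝ) / ((n : ℝ) + 1) = 1 / ((n : ℝ) + 1) := by
        rw [← sub_div]; ring
      rwa [e] at this
    refine (Finset.sum_le_sum h2).trans (le_of_eq ?_)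
    rw [Finset.sum_const, Finset.card_range, nsmul_eq_mul]
    push_cast
    field_simp
  have hlim : Tendsto (fun n : ℕ => D + C * (1 / ((n : ℝ) + 1))) atTop (𝓝 (D + C * 0)) :=
    (tendsto_one_div_add_atTop_nhds_zero_nat.const_mul C).const_add D
  simpa using ge_of_tendsto' hlim hn

end Dissip

/-! ### Flows of dissipative vector fields on the simplex -/

section Flow

variable {d : ℕ}

/-- A vector field `b` on the simplex with derivative `q ↦ q A(μ)` along zero-sum vectors `q`,
such that the second-order Taylor remainder of `b` and the increments of `A` are controlled by `C`
and `A` is a rate matrix with off-diagonal entries at least `κ`. -/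
structure DissipField (b : (Fin d → ℝ) → Fin d → ℝ)
    (A : (Fin d → ℝ) → Matrix (Fin d) (Fin d) ℝ) (C κ : ℝ) : Prop where
  nonneg : 0 ≤ C
  pos : 0 < κ
  taylor : ∀ μ ∈ simplex d, ∀ ν ∈ simplex d,
    l1 (b ν - b μ - Matrix.vecMul (ν - μ) (A μ)) ≤ C * l1 (ν - μ) ^ 2
  lip : ∀ μ ∈ simplex d, ∀ ν ∈ simplex d, ∀ q,
    l1 (Matrix.vecMul q (A μ) - Matrix.vecMul q (A ν)) ≤ C * l1 q * l1 (μ - ν)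
  offdiag : ∀ μ ∈ simplex d, ∀ x y, x ≠ y → κ ≤ A μ x y
  row : ∀ μ ∈ simplex d, ∀ x, ∑ y, A μ x y = 0

variable {b : (Fin d → ℝ) → Fin d → ℝ} {A : (Fin d → ℝ) → Matrix (Fin d) (Fin d) ℝ} {C κ : ℝ}

/-- The infinitesimal dissipativity of `A`, integrated along the segment from `μ` to `ν`. -/
lemma DissipField.dissip (H : DissipField b A C κ) {μ ν : Fin d → ℝ} (hμ : μ ∈ simplex d)
    (hν : ν ∈ simplex d) (σ : Fin d → ℝ) (hσ : ∀ y, |σ y| ≤ 1)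
    (hσq : ∀ y, σ y * (ν - μ) y = |(ν - μ) y|) :
    ∑ y, σ y * (b ν - b μ) y ≤ -(d * κ) * l1 (ν - μ) := by
  have := increment_le (g := fun s => ∑ y, σ y * b ((1 - s) • μ + s • ν) y)
    (D := -(d * κ) * l1 (ν - μ)) (C := C * l1 (ν - μ) ^ 2) ?_
  · simpa [mul_sub, Finset.sum_sub_distrib] using this
  intro s s' h0 hs h1
  have hm := seg_mem hμ hν h0 (hs.trans h1)
  have hm' := seg_mem hμ hν (h0.trans hs) h1
  set p := (1 - s) • μ + s • ν with hp
  set p' := (1 - s') • μ + s' • ν with hp'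
  have e : p' - p = (s' - s) • (ν - μ) := by
    ext z; simp [hp, hp']; ring
  have t1 := H.taylor p hm p' hm'
  rw [e, l1_smul, abs_of_nonneg (sub_nonneg.2 hs), Matrix.smul_vecMul] at t1
  have t2 := sum_mul_le_l1 σ _ hσ |>.trans t1
  have t3 := rate_dissip (A p) (H.offdiag p hm) (H.row p hm) (ν - μ) σ
    (sum_sub_eq_zero hν hμ) hσ hσq
  have t4 : ∑ y, σ y * (b p' - b p - (s' - s) • Matrix.vecMul (ν - μ) (A p)) y =
      (∑ y, σ y * b p' y - ∑ y, σ y * b p y) -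
        (s' - s) * ∑ y, σ y * Matrix.vecMul (ν - μ) (A p) y := by
    rw [Finset.mul_sum, ← Finset.sum_sub_distrib, ← Finset.sum_sub_distrib]
    refine Finset.sum_congr rfl fun y _ => ?_
    simp only [Pi.sub_apply, Pi.smul_apply, smul_eq_mul]; ring
  rw [t4] at t2
  have t5 := mul_le_mul_of_nonneg_left t3 (sub_nonneg.2 hs)
  nlinarith

variable {m : ℝ → (Fin d → ℝ) → Fin d → ℝ}

lemma DissipField.contract (H : DissipField b A C κ) (hd : 0 < d)
    (hm : ∀ μ ∈ simplex d, m 0 μ = μ ∧ (∀ t, 0 ≤ t → m t μ ∈ simplex d) ∧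
      ∀ t, 0 ≤ t → HasDerivAt (fun s => m s μ) (b (m t μ)) t)
    {μ ν : Fin d → ℝ} (hμ : μ ∈ simplex d) (hν : ν ∈ simplex d) (t : ℝ) (ht : 0 ≤ t) :
    l1 (m t ν - m t μ) ≤ Real.exp (-(d * κ) * t) * l1 (ν - μ) := by
  have hlam : 0 < d * κ := mul_pos (by exact_mod_cast hd) H.pos
  have := l1_gronwall (v := fun s => m s ν - m s μ) (v' := fun s => b (m s ν) - b (m s μ))
    hlam le_rfl (fun s hs => ((hm ν hν).2.2 s hs).sub ((hm μ hμ).2.2 s hs))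
    (fun s hs σ h1 h2 => by
      simpa using H.dissip ((hm μ hμ).2.1 s hs) ((hm ν hν).2.1 s hs) σ h1 h2) t ht
  simpa [(hm μ hμ).1, (hm ν hν).1] using this

/-- Difference quotient at time `t` of the flow `m` in the direction of the vertex `z`. -/
noncomputable def quot (m : ℝ → (Fin d → ℝ) → Fin d → ℝ) (μ : Fin d → ℝ) (z : Fin d) (ε t : ℝ) :
    Fin d → ℝ :=
  ε⁻¹ • (m t ((1 - ε) • μ + ε • bvec z) - m t μ)

lemma DissipField.l1_quot_le (H : DissipField b A C κ) (hd : 0 < d)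
    (hm : ∀ μ ∈ simplex d, m 0 μ = μ ∧ (∀ t, 0 ≤ t → m t μ ∈ simplex d) ∧
      ∀ t, 0 ≤ t → HasDerivAt (fun s => m s μ) (b (m t μ)) t)
    {μ : Fin d → ℝ} (hμ : μ ∈ simplex d) (z : Fin d) {ε : ℝ} (h0 : 0 < ε) (h1 : ε ≤ 1)
    (t : ℝ) (ht : 0 ≤ t) : l1 (quot m μ z ε t) ≤ 2 := by
  have h2 := H.contract hd hm hμ (seg_mem hμ (bvec_mem z) h0.le h1) t ht
  rw [seg_sub_left, l1_smul, abs_of_pos h0] at h2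
  have hlam : 0 < d * κ := mul_pos (by exact_mod_cast hd) H.pos
  have h3 : Real.exp (-(d * κ) * t) ≤ 1 := Real.exp_le_one_iff.2 (by nlinarith)
  have h4 := l1_sub_le_two (bvec_mem z) hμ
  have h5 := l1_nonneg (bvec z - μ)
  unfold quot
  rw [l1_smul, abs_of_pos (inv_pos.2 h0), inv_mul_le_iff₀ h0]
  refine h2.trans ?_
  calc _ ≤ 1 * (ε * l1 (bvec z - μ)) := mul_le_mul_of_nonneg_right h3 (by positivity)
    _ ≤ ε * 2 := by rw [one_mul]; gcongr

/-- The difference quotients solve the linearized equation up to an error of order `ε`. -/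
lemma DissipField.quot_deriv (H : DissipField b A C κ) (hd : 0 < d)
    (hm : ∀ μ ∈ simplex d, m 0 μ = μ ∧ (∀ t, 0 ≤ t → m t μ ∈ simplex d) ∧
      ∀ t, 0 ≤ t → HasDerivAt (fun s => m s μ) (b (m t μ)) t)
    {μ : Fin d → ℝ} (hμ : μ ∈ simplex d) (z : Fin d) {ε : ℝ} (h0 : 0 < ε) (h1 : ε ≤ 1) :
    ∃ r : ℝ → Fin d → ℝ, ∀ t, 0 ≤ t → l1 (r t) ≤ 4 * C * ε ∧
      HasDerivAt (quot m μ z ε)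
        (Matrix.vecMul (quot m μ z ε t) (A (m t μ)) + r t) t := by
  have hs := seg_mem hμ (bvec_mem z) h0.le h1
  refine ⟨fun t => ε⁻¹ • (b (m t ((1 - ε) • μ + ε • bvec z)) - b (m t μ)) -
    Matrix.vecMul (quot m μ z ε t) (A (m t μ)), fun t ht => ⟨?_, ?_⟩⟩
  · have h2 := H.taylor _ ((hm μ hμ).2.1 t ht) _ ((hm _ hs).2.1 t ht)
    have h3 := H.l1_quot_le hd hm hμ z h0 h1 t ht
    have h4 : l1 (m t ((1 - ε) • μ + ε • bvec z) - m t μ) ≤ ε * 2 := by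
      unfold quot at h3
      rwa [l1_smul, abs_of_pos (inv_pos.2 h0), inv_mul_le_iff₀ h0] at h3
    have h5 := l1_nonneg (m t ((1 - ε) • μ + ε • bvec z) - m t μ)
    simp only [quot, Matrix.smul_vecMul]
    rw [← smul_sub, l1_smul, abs_of_pos (inv_pos.2 h0), inv_mul_le_iff₀ h0]
    refine h2.trans ?_
    have h6 : l1 (m t ((1 - ε) • μ + ε • bvec z) - m t μ) ^ 2 ≤ (ε * 2) ^ 2 := by gcongr
    nlinarith [mul_le_mul_of_nonneg_left h6 H.nonneg]
  · have := (((hm _ hs).2.2 t ht).sub ((hm μ hμ).2.2 t ht)).const_smul ε⁻¹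
    rw [add_sub_cancel]
    exact this

/-- Difference quotients with different steps and base points are close, uniformly in time. With
`ν = μ` this is the Cauchy property as `ε → 0`, and as `ε, ε' → 0` it is the Lipschitz dependence
of the derivative of the flow on the base point. -/
lemma DissipField.quot_sub_le (H : DissipField b A C κ) (hd : 0 < d)
    (hm : ∀ μ ∈ simplex d, m 0 μ = μ ∧ (∀ t, 0 ≤ t → m t μ ∈ simplex d) ∧
      ∀ t, 0 ≤ t → HasDerivAt (fun s => m s μ) (b (m t μ)) t)
    {μ ν : Fin d → ℝ} (hμ : μ ∈ simplex d) (hν : ν ∈ simplex d) (z : Fin d) {ε ε' : ℝ}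
    (h0 : 0 < ε) (h1 : ε ≤ 1) (h0' : 0 < ε') (h1' : ε' ≤ 1) (t : ℝ) (ht : 0 ≤ t) :
    l1 (quot m μ z ε t - quot m ν z ε' t) ≤
      l1 (μ - ν) + (2 * C * l1 (μ - ν) + 4 * C * (ε + ε')) / (d * κ) := by
  have hlam : 0 < d * κ := mul_pos (by exact_mod_cast hd) H.pos
  obtain ⟨r, hr⟩ := H.quot_deriv hd hm hμ z h0 h1
  obtain ⟨r', hr'⟩ := H.quot_deriv hd hm hν z h0' h1'
  have hC := H.nonneg
  have hn := l1_nonneg (μ - ν)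
  have hinit : ∀ (μ : Fin d → ℝ) (_ : μ ∈ simplex d) (ε : ℝ), 0 < ε → ε ≤ 1 →
      quot m μ z ε 0 = bvec z - μ := by
    intro μ hμ ε h0 h1
    unfold quot
    rw [(hm μ hμ).1, (hm _ (seg_mem hμ (bvec_mem z) h0.le h1)).1, seg_sub_left, smul_smul,
      inv_mul_cancel₀ h0.ne', one_smul]
  have key := l1_gronwall (v := fun t => quot m μ z ε t - quot m ν z ε' t) hlam
    (R := 2 * C * l1 (μ - ν) + 4 * C * (ε + ε')) (by positivity)
    (fun t ht => (hr t ht).2.sub (hr' t ht).2) ?_ t ht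
  · have e0 : l1 (quot m μ z ε 0 - quot m ν z ε' 0) = l1 (μ - ν) := by
      rw [hinit μ hμ ε h0 h1, hinit ν hν ε' h0' h1', l1_sub_comm]
      congr 1; abel
    simp only [e0] at key
    have h3 : Real.exp (-(d * κ) * t) ≤ 1 := Real.exp_le_one_iff.2 (by nlinarith)
    have := mul_le_mul_of_nonneg_right h3 hn
    linarith
  · intro t ht σ hσ1 hσ2
    set q := quot m μ z ε t
    set q' := quot m ν z ε' t
    have hmμ := (hm μ hμ).2.1 t ht
    have hmν := (hm ν hν).2.1 t ht
    have hsum : ∀ (μ : Fin d → ℝ) (_ : μ ∈ simplex d) (ε : ℝ), 0 < ε → ε ≤ 1 →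
        ∑ x, quot m μ z ε t x = 0 := by
      intro μ hμ ε h0 h1
      have := sum_sub_eq_zero ((hm _ (seg_mem hμ (bvec_mem z) h0.le h1)).2.1 t ht)
        ((hm μ hμ).2.1 t ht)
      simp only [quot, Pi.smul_apply, smul_eq_mul, ← Finset.mul_sum, this, mul_zero]
    have hq0 : ∑ x, (q - q') x = 0 := by
      simp only [Pi.sub_apply, Finset.sum_sub_distrib]
      rw [hsum μ hμ ε h0 h1, hsum ν hν ε' h0' h1', sub_zero]
    have a1 := rate_dissip (A (m t μ)) (H.offdiag _ hmμ) (H.row _ hmμ) (q - q') σ hq0 hσ1 hσ2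
    have a2 := (sum_mul_le_l1 σ _ hσ1).trans (H.lip _ hmμ _ hmν q')
    have a3 := (sum_mul_le_l1 σ _ hσ1).trans (hr t ht).1
    have a4 := (sum_mul_le_l1 (-σ) _ (by simpa using hσ1)).trans (hr' t ht).1
    have a5 : l1 (m t μ - m t ν) ≤ l1 (μ - ν) := by
      have h3 : Real.exp (-(d * κ) * t) ≤ 1 := Real.exp_le_one_iff.2 (by nlinarith)
      have := mul_le_mul_of_nonneg_right h3 hn
      linarith [H.contract hd hm hν hμ t ht]
    have a6 : C * l1 q' * l1 (m t μ - m t ν) ≤ C * 2 * l1 (μ - ν) := by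
      have := H.l1_quot_le hd hm hν z h0' h1' t ht
      have := l1_nonneg q'
      have := l1_nonneg (m t μ - m t ν)
      gcongr
    have e : ∑ y, σ y * (Matrix.vecMul q (A (m t μ)) + r t -
          (Matrix.vecMul q' (A (m t ν)) + r' t)) y =
        ∑ y, σ y * Matrix.vecMul (q - q') (A (m t μ)) y +
        ∑ y, σ y * (Matrix.vecMul q' (A (m t μ)) - Matrix.vecMul q' (A (m t ν))) y +
        ∑ y, σ y * r t y + ∑ y, (-σ) y * r' t y := by
      rw [← Finset.sum_add_distrib, ← Finset.sum_add_distrib, ← Finset.sum_add_distrib]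
      refine Finset.sum_congr rfl fun y _ => ?_
      simp only [Matrix.sub_vecMul, Pi.sub_apply, Pi.add_apply, Pi.neg_apply]; ring
    rw [e]
    linarith

/-- The flow of a dissipative field satisfies (Erg). -/
theorem DissipField.erg (H : DissipField b A C κ) (hd : 0 < d)
    (hm : ∀ μ ∈ simplex d, m 0 μ = μ ∧ (∀ t, 0 ≤ t → m t μ ∈ simplex d) ∧
      ∀ t, 0 ≤ t → HasDerivAt (fun s => m s μ) (b (m t μ)) t) :
    ∃ (δm : ℝ → (Fin d → ℝ) → Fin d → Fin d → ℝ) (lam c₁ k₁ : ℝ), Erg m δm lam c₁ k₁ := by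
  have hlam : 0 < d * κ := mul_pos (by exact_mod_cast hd) H.pos
  have hC := H.nonneg
  have hex : ∀ t, 0 ≤ t → ∀ μ ∈ simplex d, ∀ z,
      ∃ v, Tendsto (fun ε => quot m μ z ε t) (𝓝[>] 0) (𝓝 v) := by
    intro t ht μ hμ z
    rw [← cauchy_map_iff_exists_tendsto, Metric.cauchy_iff]
    refine ⟨inferInstance, fun e he => ?_⟩
    set K := 8 * C / (d * κ) with hK
    have hK0 : 0 ≤ K := by positivity
    set η := min 1 (e / (2 * (K + 1))) with hη
    have hη0 : 0 < η := by positivity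
    refine ⟨(fun ε => quot m μ z ε t) '' Set.Ioo 0 η,
      image_mem_map (Ioo_mem_nhdsGT hη0), ?_⟩
    rintro _ ⟨ε, hε, rfl⟩ _ ⟨ε', hε', rfl⟩
    have h1 : η ≤ 1 := min_le_left _ _
    have h := H.quot_sub_le hd hm hμ hμ z hε.1 (hε.2.le.trans h1) hε'.1 (hε'.2.le.trans h1) t ht
    rw [sub_self, l1_zero] at h
    have h2 : (2 * C * 0 + 4 * C * (ε + ε')) / (d * κ) ≤ K * η := by
      rw [hK, div_mul_eq_mul_div]
      gcongr
      nlinarith [hε.2, hε'.2]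
    have h3 : K * η ≤ e / 2 := by
      have : η ≤ e / (2 * (K + 1)) := min_le_right _ _
      calc K * η ≤ (K + 1) * (e / (2 * (K + 1))) := by gcongr; linarith
        _ = e / 2 := by field_simp
    refine lt_of_le_of_lt ((dist_pi_le_iff (r := e / 2) (by positivity)).2 fun x => ?_)
      (half_lt_self he)
    rw [Real.dist_eq]
    have := abs_le_l1 (quot m μ z ε t - quot m μ z ε' t) x
    simp only [Pi.sub_apply] at this
    linarith
  choose! δm hδ using hex
  refine ⟨δm, d * κ, 1, 1 + 2 * C / (d * κ), hlam, one_pos, by positivity, ?_, ?_, ?_⟩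
  · intro t ht μ hμ ν hν
    rw [one_mul]
    exact H.contract hd hm hν hμ t ht
  · intro t ht μ hμ z x
    have := (tendsto_pi_nhds.1 (hδ t ht μ hμ z)) x
    refine this.congr fun ε => ?_
    simp [quot, div_eq_inv_mul]
  · intro t ht μ hμ ν hν z
    have l : Tendsto (fun ε => l1 (quot m μ z ε t - quot m ν z ε t)) (𝓝[>] 0)
        (𝓝 (l1 (δm t μ z - δm t ν z))) :=
      (continuous_l1.tendsto _).comp ((hδ t ht μ hμ z).sub (hδ t ht ν hν z))
    have r : Tendsto (fun ε : ℝ => l1 (μ - ν) +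
        (2 * C * l1 (μ - ν) + 4 * C * (ε + ε)) / (d * κ)) (𝓝[>] 0)
        (𝓝 (l1 (μ - ν) + (2 * C * l1 (μ - ν) + 4 * C * (0 + 0)) / (d * κ))) := by
      refine Tendsto.mono_left ?_ nhdsWithin_le_nhds
      exact Continuous.tendsto (by fun_prop) 0
    refine (le_of_tendsto_of_tendsto l r ?_).trans (le_of_eq (by ring))
    filter_upwards [Ioo_mem_nhdsGT (one_pos (α := ℝ))] with ε hε
    exact H.quot_sub_le hd hm hμ hν z hε.1 hε.2.le hε.1 hε.2.le t ht

end Flow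

/-! ### Calculus of linear functional derivatives -/

section Calculus

variable {d : ℕ} {F : (Fin d → ℝ) → ℝ} {δF : (Fin d → ℝ) → Fin d → ℝ}

/-- One constant for all the bounds contained in (D-Lip). -/
lemma DLipR.exists_const (h : DLipR F δF) : ∃ K : ℝ, 0 ≤ K ∧
    (∀ μ ∈ simplex d, ∀ ν ∈ simplex d, |F μ - F ν| ≤ K * l1 (μ - ν)) ∧
    (∀ μ ∈ simplex d, ∀ ν ∈ simplex d, ∀ z, |δF μ z - δF ν z| ≤ K * l1 (μ - ν)) ∧
    (∀ μ ∈ simplex d, ∀ z, |δF μ z| ≤ K) := by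
  obtain ⟨⟨K₁, h1⟩, -, ⟨K₂, h2⟩⟩ := h
  set S := ∑ z, |δF (bvec z) z| with hS
  have hS0 : 0 ≤ S := Finset.sum_nonneg fun _ _ => abs_nonneg _
  have p1 := abs_nonneg K₁
  have p2 := abs_nonneg K₂
  have q1 := le_abs_self K₁
  have q2 := le_abs_self K₂
  have key : ∀ μ ∈ simplex d, ∀ ν ∈ simplex d, ∀ z, |δF μ z - δF ν z| ≤ |K₂| * l1 (μ - ν) :=
    fun μ hμ ν hν z => ((abs_le_l1 (δF μ - δF ν) z).trans (h2 μ hμ ν hν)).trans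
      (mul_le_mul_of_nonneg_right q2 (l1_nonneg _))
  refine ⟨|K₁| + 2 * |K₂| + S, by positivity, ?_, ?_, ?_⟩
  · intro μ hμ ν hν
    exact (h1 μ hμ ν hν).trans (mul_le_mul_of_nonneg_right (by linarith) (l1_nonneg _))
  · intro μ hμ ν hν z
    exact (key μ hμ ν hν z).trans (mul_le_mul_of_nonneg_right (by linarith) (l1_nonneg _))
  · intro μ hμ z
    have a1 := key μ hμ _ (bvec_mem z) z
    have a2 := mul_le_mul_of_nonneg_left (l1_sub_le_two hμ (bvec_mem z)) p2
    have a3 : |δF (bvec z) z| ≤ S :=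
      Finset.single_le_sum (f := fun z => |δF (bvec z) z|) (fun _ _ => abs_nonneg _)
        (Finset.mem_univ z)
    have a4 := abs_add_le (δF μ z - δF (bvec z) z) (δF (bvec z) z)
    rw [sub_add_cancel] at a4
    linarith

/-- A one-sided derivative towards `ν`, at a point of the segment from `μ` to `ν`, is a right
derivative along the segment after rescaling by the remaining length `1 - s`. -/
lemma seg_right_deriv {μ ν : Fin d → ℝ} {s v : ℝ} (hs : s < 1)
    (h : Tendsto (fun ε : ℝ => (F ((1 - ε) • ((1 - s) • μ + s • ν) + ε • ν) -
      F ((1 - s) • μ + s • ν)) / ε) (𝓝[>] 0) (𝓝 v)) :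
    HasDerivWithinAt (fun s => F ((1 - s) • μ + s • ν)) (v / (1 - s)) (Set.Ici s) s := by
  have h1s : 0 < 1 - s := sub_pos.2 hs
  rw [← hasDerivWithinAt_Ioi_iff_Ici, hasDerivWithinAt_iff_tendsto_slope' (by simp)]
  have hφ : Tendsto (fun s' : ℝ => (s' - s) / (1 - s)) (𝓝[>] s) (𝓝[>] 0) := by
    refine tendsto_nhdsWithin_iff.2 ⟨?_, ?_⟩
    · refine Tendsto.mono_left ?_ nhdsWithin_le_nhds
      have : Continuous (fun s' : ℝ => (s' - s) / (1 - s)) := by fun_prop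
      simpa using this.tendsto s
    · filter_upwards [self_mem_nhdsWithin] with s' hs'
      exact div_pos (sub_pos.2 hs') h1s
  refine ((h.comp hφ).div_const (1 - s)).congr' ?_
  filter_upwards [self_mem_nhdsWithin] with s' hs'
  have hs'' : s' - s ≠ 0 := (sub_pos.2 hs').ne'
  have e : (1 - (s' - s) / (1 - s)) • ((1 - s) • μ + s • ν) + ((s' - s) / (1 - s)) • ν =
      (1 - s') • μ + s' • ν := by
    ext z
    simp only [Pi.add_apply, Pi.smul_apply, smul_eq_mul]
    field_simp
    ring
  simp only [Function.comp, e, slope_def_field]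
  field_simp

lemma seg_continuousOn {K : ℝ} (hK : 0 ≤ K)
    (h1 : ∀ μ ∈ simplex d, ∀ ν ∈ simplex d, |F μ - F ν| ≤ K * l1 (μ - ν))
    {μ ν : Fin d → ℝ} (hμ : μ ∈ simplex d) (hν : ν ∈ simplex d) :
    ContinuousOn (fun s : ℝ => F ((1 - s) • μ + s • ν)) (Set.Icc 0 1) := by
  refine LipschitzOnWith.continuousOn (K := (K * l1 (ν - μ)).toNNReal) ?_
  refine LipschitzOnWith.of_dist_le_mul fun s hs s' hs' => ?_
  rw [Real.coe_toNNReal _ (mul_nonneg hK (l1_nonneg _)), Real.dist_eq, Real.dist_eq]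
  refine (h1 _ (seg_mem hμ hν hs.1 hs.2) _ (seg_mem hμ hν hs'.1 hs'.2)).trans (le_of_eq ?_)
  have e : ((1 - s) • μ + s • ν) - ((1 - s') • μ + s' • ν) = (s - s') • (ν - μ) := by
    ext z; simp; ring
  rw [e, l1_smul]; ring

lemma abs_sub_le_of_right_deriv {g g' : ℝ → ℝ} {a c B : ℝ} (ha : 0 ≤ a)
    (hg : ContinuousOn g (Set.Icc 0 a))
    (hg' : ∀ s ∈ Set.Ico 0 a, HasDerivWithinAt g (g' s) (Set.Ici s) s)
    (hB : ∀ s ∈ Set.Ico 0 a, |g' s - c| ≤ B) : |g a - g 0 - a * c| ≤ B * a := by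
  have := norm_image_sub_le_of_norm_deriv_right_le_segment (f := fun s => g s - s * c)
    (f' := fun s => g' s - c) (a := 0) (b := a) (C := B)
    (hg.sub (by fun_prop))
    (fun s hs => (hg' s hs).sub (by simpa using (hasDerivWithinAt_id s _).mul_const c))
    hB a ⟨ha, le_rfl⟩
  simp only [Real.norm_eq_abs, zero_mul, sub_zero] at this
  rwa [show g a - g 0 - a * c = g a - a * c - g 0 by ring]

/-- First-order expansion towards a vertex, with a remainder that is uniform in the base point. -/
lemma DLipR.expand_vertex (h : DLipR F δF) (z : Fin d) : ∃ C : ℝ, ∀ μ ∈ simplex d, ∀ a : ℝ,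
    0 ≤ a → a ≤ 1 / 2 →
      |F ((1 - a) • μ + a • bvec z) - F μ - a * δF μ z| ≤ C * a ^ 2 := by
  obtain ⟨K, hK, h1, h2, h3⟩ := h.exists_const
  refine ⟨6 * K, fun μ hμ a ha0 ha1 => ?_⟩
  have hz := bvec_mem z
  have := abs_sub_le_of_right_deriv (g := fun s => F ((1 - s) • μ + s • bvec z))
    (g' := fun s => δF ((1 - s) • μ + s • bvec z) z / (1 - s)) (c := δF μ z) (B := 6 * K * a)
    ha0 ((seg_continuousOn hK h1 hμ hz).mono (Set.Icc_subset_Icc_right (by linarith)))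
    (fun s hs => seg_right_deriv (by linarith [hs.2])
      (h.2.1 _ (seg_mem hμ hz hs.1 (by linarith [hs.2])) z)) ?_
  · simp only [sub_zero, one_smul, zero_smul, add_zero] at this
    linarith
  · intro s hs
    have hs0 := hs.1
    have hsa := hs.2
    have hm := seg_mem hμ hz hs.1 (by linarith)
    have a1 := h2 _ hm _ hμ z
    rw [seg_sub_left, l1_smul, abs_of_nonneg hs.1] at a1
    have a2 := l1_sub_le_two hz hμ
    have a3 := h3 _ hμ z
    have h1s : 0 < 1 - s := by linarith
    set w := δF ((1 - s) • μ + s • bvec z) z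
    set v := δF μ z
    have e : w / (1 - s) - v = ((w - v) + s * v) / (1 - s) := by field_simp; ring
    rw [e, abs_div, abs_of_pos h1s, div_le_iff₀ h1s]
    have b1 := abs_add_le (w - v) (s * v)
    rw [abs_mul, abs_of_nonneg hs0] at b1
    have b2 : K * (s * l1 (bvec z - μ)) ≤ K * (s * 2) := by gcongr
    have b3 : s * |v| ≤ s * K := by gcongr
    have b4 : K * s ≤ K * a := by gcongr
    have b5 : 6 * K * a * (1 / 2) ≤ 6 * K * a * (1 - s) := by gcongr; linarith
    linarith

/-- First-order expansion towards an arbitrary point `ν`. The points `ν` admitting such an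
expansion form a convex set: moving first towards `ν₁` and then towards `ν₂` differs from moving
towards `p ν₁ + q ν₂` only by a second-order displacement. Since this set contains the vertices, it
contains the simplex. -/
lemma DLipR.expand (h : DLipR F δF) {ν : Fin d → ℝ} (hν : ν ∈ simplex d) :
    ∃ C : ℝ, ∀ μ ∈ simplex d, ∀ a : ℝ, 0 ≤ a → a ≤ 1 / 2 →
      |F ((1 - a) • μ + a • ν) - F μ - a * ∑ z, ν z * δF μ z| ≤ C * a ^ 2 := by
  obtain ⟨K, hK, h1, h2, h3⟩ := h.exists_const
  set T : Set (Fin d → ℝ) := {ν | ν ∈ simplex d ∧ ∃ C : ℝ, ∀ μ ∈ simplex d, ∀ a : ℝ, 0 ≤ a →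
    a ≤ 1 / 2 → |F ((1 - a) • μ + a • ν) - F μ - a * ∑ z, ν z * δF μ z| ≤ C * a ^ 2} with hT
  have hconv : Convex ℝ T := by
    rintro ν₁ ⟨hν₁, C₁, hC₁⟩ ν₂ ⟨hν₂, C₂, hC₂⟩ p q hp hq hpq
    have hmem : p • ν₁ + q • ν₂ ∈ simplex d := by
      have := seg_mem hν₁ hν₂ hq (by linarith)
      rwa [show (1 : ℝ) - q = p by linarith] at this
    refine ⟨hmem, |C₁| + |C₂| + 4 * K, fun μ hμ a ha0 ha1 => ?_⟩
    have hp1 : p ≤ 1 := by linarith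
    have hq1 : q ≤ 1 := by linarith
    have hap0 : 0 ≤ a * p := by positivity
    have haq0 : 0 ≤ a * q := by positivity
    have hap : a * p ≤ a := mul_le_of_le_one_right ha0 hp1
    have haq : a * q ≤ a := mul_le_of_le_one_right ha0 hq1
    set μ₁ := (1 - a * p) • μ + (a * p) • ν₁ with hμ₁
    have hμ₁m : μ₁ ∈ simplex d := seg_mem hμ hν₁ hap0 (by linarith)
    set μ₂ := (1 - a * q) • μ₁ + (a * q) • ν₂ with hμ₂
    have hμ₂m : μ₂ ∈ simplex d := seg_mem hμ₁m hν₂ haq0 (by linarith)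
    have e1 := hC₁ μ hμ (a * p) hap0 (by linarith)
    have e2 := hC₂ μ₁ hμ₁m (a * q) haq0 (by linarith)
    rw [← hμ₁] at e1
    rw [← hμ₂] at e2
    have e3 := h1 _ (seg_mem hμ hmem ha0 (by linarith)) _ hμ₂m
    have d3 : ((1 - a) • μ + a • (p • ν₁ + q • ν₂)) - μ₂ = (a * p * (a * q)) • (ν₁ - μ) := by
      ext z
      simp only [hμ₂, hμ₁, Pi.sub_apply, Pi.add_apply, Pi.smul_apply, smul_eq_mul]
      rw [show q = 1 - p by linarith]; ring
    have s0 : a * p * (a * q) ≤ a ^ 2 := by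
      rw [sq]; exact mul_le_mul hap haq haq0 ha0
    rw [d3, l1_smul, abs_of_nonneg (mul_nonneg hap0 haq0)] at e3
    have e3' : K * (a * p * (a * q) * l1 (ν₁ - μ)) ≤ K * (a ^ 2 * 2) := by
      have := l1_sub_le_two hν₁ hμ
      have := l1_nonneg (ν₁ - μ)
      gcongr
    -- The derivative at the intermediate point differs from the one at `μ` by `O(a)`.
    have e4 : |∑ z, ν₂ z * δF μ₁ z - ∑ z, ν₂ z * δF μ z| ≤ K * (a * 2) := by
      have a1 : ∀ z, |(δF μ₁ z - δF μ z)| ≤ K * (a * 2) := by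
        intro z
        refine (h2 _ hμ₁m _ hμ z).trans ?_
        rw [hμ₁, seg_sub_left, l1_smul, abs_of_nonneg hap0]
        have := l1_sub_le_two hν₁ hμ
        have := l1_nonneg (ν₁ - μ)
        gcongr
      have a2 := sum_mul_le_mul_l1 (fun z => δF μ₁ z - δF μ z) ν₂ a1
      have a3 : l1 ν₂ = 1 := by
        rw [← hν₂.2]; exact Finset.sum_congr rfl fun z _ => abs_of_nonneg (hν₂.1 z)
      rw [a3, mul_one] at a2
      rw [← Finset.sum_sub_distrib]
      convert a2 using 3 with z
      ring
    have e4' : |a * q * (∑ z, ν₂ z * δF μ₁ z - ∑ z, ν₂ z * δF μ z)| ≤ a * (K * (a * 2)) := by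
      rw [abs_mul, abs_of_nonneg haq0]
      gcongr
    have f1 : C₁ * (a * p) ^ 2 ≤ |C₁| * a ^ 2 :=
      mul_le_mul (le_abs_self _) (by gcongr) (by positivity) (abs_nonneg _)
    have f2 : C₂ * (a * q) ^ 2 ≤ |C₂| * a ^ 2 :=
      mul_le_mul (le_abs_self _) (by gcongr) (by positivity) (abs_nonneg _)
    have es : ∑ z, (p • ν₁ + q • ν₂) z * δF μ z =
        p * ∑ z, ν₁ z * δF μ z + q * ∑ z, ν₂ z * δF μ z := by
      rw [Finset.mul_sum, Finset.mul_sum, ← Finset.sum_add_distrib]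
      refine Finset.sum_congr rfl fun z _ => ?_
      simp only [Pi.add_apply, Pi.smul_apply, smul_eq_mul]; ring
    rw [es]
    rw [abs_le] at e1 e2 e3 e4' ⊢
    constructor <;> nlinarith
  have hsub : convexHull ℝ (Set.range fun i j : Fin d => if i = j then (1 : ℝ) else 0) ⊆ T := by
    refine convexHull_min ?_ hconv
    rintro _ ⟨z, rfl⟩
    have e : (fun j : Fin d => if z = j then (1 : ℝ) else 0) = bvec z := by
      ext j; simp [bvec, eq_comm]
    simp only [e]
    obtain ⟨C, hC⟩ := h.expand_vertex z
    refine ⟨bvec_mem z, C, fun μ hμ a h0 h1 => ?_⟩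
    have e' : ∑ w, bvec z w * δF μ w = δF μ z := by simp [bvec]
    rw [e']
    exact hC μ hμ a h0 h1
  rw [convexHull_basis_eq_stdSimplex] at hsub
  exact (hsub hν).2

lemma eq_zero_of_quadratic {v C : ℝ} (h : ∀ a : ℝ, 0 ≤ a → a ≤ 1 / 2 → |a * v| ≤ C * a ^ 2) :
    v = 0 := by
  have h1 : ∀ᶠ a : ℝ in 𝓝[>] 0, |v| ≤ C * a := by
    filter_upwards [Ioo_mem_nhdsGT (show (0 : ℝ) < 1 / 2 by norm_num)] with a ha
    have := h a ha.1.le ha.2.le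
    rw [abs_mul, abs_of_pos ha.1] at this
    have ha0 : 0 < a := ha.1
    nlinarith
  have h2 : Tendsto (fun a : ℝ => C * a) (𝓝[>] 0) (𝓝 0) := by
    refine Tendsto.mono_left ?_ nhdsWithin_le_nhds
    have hc : Continuous fun a : ℝ => C * a := by fun_prop
    simpa using hc.tendsto 0
  exact abs_nonpos_iff.1 (ge_of_tendsto h2 h1)

/-- The linear functional derivative is centred: it is the derivative in the direction `δ_z - μ`,
and these directions average to zero under `μ`. -/
lemma DLipR.centred (h : DLipR F δF) {μ : Fin d → ℝ} (hμ : μ ∈ simplex d) :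
    ∑ z, μ z * δF μ z = 0 := by
  obtain ⟨C, hC⟩ := h.expand hμ
  refine eq_zero_of_quadratic (C := C) fun a h0 h1 => ?_
  have := hC μ hμ a h0 h1
  rwa [← add_smul, sub_add_cancel, one_smul, sub_self, zero_sub, abs_neg] at this

lemma tendsto_quot_of_quadratic {f : ℝ → ℝ} {c v C η : ℝ} (hη : 0 < η)
    (h : ∀ a, 0 ≤ a → a ≤ η → |f a - c - a * v| ≤ C * a ^ 2) :
    Tendsto (fun a => (f a - c) / a) (𝓝[>] 0) (𝓝 v) := by
  rw [tendsto_iff_dist_tendsto_zero]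
  have h2 : Tendsto (fun a : ℝ => C * a) (𝓝[>] 0) (𝓝 0) := by
    refine Tendsto.mono_left ?_ nhdsWithin_le_nhds
    have hc : Continuous fun a : ℝ => C * a := by fun_prop
    simpa using hc.tendsto 0
  refine squeeze_zero' (Eventually.of_forall fun _ => dist_nonneg) ?_ h2
  filter_upwards [Ioo_mem_nhdsGT hη] with a ha
  have ha0 : 0 < a := ha.1
  rw [Real.dist_eq, show (f a - c) / a - v = (f a - c - a * v) / a by field_simp,
    abs_div, abs_of_pos ha0, div_le_iff₀ ha0]
  have := h a ha0.le ha.2.le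
  nlinarith

/-- Second-order Taylor estimate on the simplex. -/
lemma DLipR.taylor (h : DLipR F δF) : ∃ K : ℝ, 0 ≤ K ∧ ∀ μ ∈ simplex d, ∀ ν ∈ simplex d,
    |F ν - F μ - ∑ z, (ν - μ) z * δF μ z| ≤ K * l1 (ν - μ) ^ 2 := by
  obtain ⟨K, hK, h1, h2, h3⟩ := h.exists_const
  refine ⟨K, hK, fun μ hμ ν hν => ?_⟩
  obtain ⟨C, hC⟩ := h.expand hν
  have := abs_sub_le_of_right_deriv (g := fun s => F ((1 - s) • μ + s • ν))
    (g' := fun s => (∑ z, ν z * δF ((1 - s) • μ + s • ν) z) / (1 - s))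
    (c := ∑ z, (ν - μ) z * δF μ z) (B := K * l1 (ν - μ) ^ 2)
    zero_le_one (seg_continuousOn hK h1 hμ hν)
    (fun s hs => seg_right_deriv hs.2
      (tendsto_quot_of_quadratic (by norm_num : (0 : ℝ) < 1 / 2)
        (hC _ (seg_mem hμ hν hs.1 hs.2.le)))) ?_
  · simpa using this
  · intro s hs
    have hm := seg_mem hμ hν hs.1 hs.2.le
    set p := (1 - s) • μ + s • ν with hp
    have h1s : 0 < 1 - s := by linarith [hs.2]
    have e : (∑ z, ν z * δF p z) / (1 - s) = ∑ z, (ν - μ) z * δF p z := by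
      -- Centring at `p` replaces `ν` by `ν - p = (1 - s) (ν - μ)`.
      have c := h.centred hm
      rw [div_eq_iff h1s.ne', ← sub_zero (∑ z, ν z * δF p z), ← c, ← Finset.sum_sub_distrib,
        Finset.sum_mul]
      refine Finset.sum_congr rfl fun z _ => ?_
      have : p z = (1 - s) * μ z + s * ν z := by simp [hp]
      rw [this, Pi.sub_apply]; ring
    rw [e, ← Finset.sum_sub_distrib]
    have a1 : ∀ z, |δF p z - δF μ z| ≤ K * l1 (ν - μ) := by
      intro z
      refine (h2 _ hm _ hμ z).trans ?_
      rw [hp, seg_sub_left, l1_smul, abs_of_nonneg hs.1]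
      exact mul_le_mul_of_nonneg_left (mul_le_of_le_one_left (l1_nonneg _) hs.2.le) hK
    have a2 := sum_mul_le_mul_l1 (fun z => δF p z - δF μ z) (ν - μ) a1
    refine le_trans (le_of_eq ?_) (a2.trans (le_of_eq (by ring)))
    congr 1
    exact Finset.sum_congr rfl fun z _ => by ring

/-- Wherever moving mass from `w` to `x` stays in the simplex, `D^m_{wx} F` is the difference of
the linear functional derivatives. -/
lemma DLipR.dm_eq (h : DLipR F δF) {μ : Fin d → ℝ} (hμ : μ ∈ simplex d) {w x : Fin d}
    (hw : 0 < μ w) {v : ℝ} (hv : HasDmDerivAt F μ w x v) : v = δF μ x - δF μ w := by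
  obtain ⟨K, hK, hT⟩ := h.taylor
  have hmem : ∀ a, 0 ≤ a → a ≤ μ w → μ + a • (bvec x - bvec w) ∈ simplex d := by
    intro a h0 h1
    refine ⟨fun z => ?_, ?_⟩
    · have hz := hμ.1 z
      simp only [Pi.add_apply, Pi.smul_apply, Pi.sub_apply, bvec, smul_eq_mul]
      split_ifs with h1 h2 h2
      · linarith
      · linarith
      · subst h2; linarith
      · linarith
    · simp [Finset.sum_add_distrib, ← Finset.mul_sum, Finset.sum_sub_distrib, hμ.2,
        (bvec_mem x).2, (bvec_mem w).2]
  refine tendsto_nhds_unique hv (tendsto_quot_of_quadratic (C := K * 4) hw fun a h0 h1 => ?_)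
  have t := hT μ hμ _ (hmem a h0 h1)
  rw [add_sub_cancel_left, l1_smul, abs_of_nonneg h0] at t
  have e : ∑ z, (a • (bvec x - bvec w)) z * δF μ z = a * (δF μ x - δF μ w) := by
    simp [bvec, sub_mul, mul_sub, Finset.sum_sub_distrib]
  rw [e] at t
  refine t.trans ?_
  have h2 := l1_sub_le_two (bvec_mem x) (bvec_mem w)
  have h3 := l1_nonneg (bvec x - bvec w)
  calc K * (a * l1 (bvec x - bvec w)) ^ 2 ≤ K * (a * 2) ^ 2 := by gcongr
    _ = K * 4 * a ^ 2 := by ring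

/-- Averaging `D^m_{wx} F` over the source `w` recovers the linear functional derivative. -/
lemma DLipR.sum_dm_eq (h : DLipR F δF) {μ : Fin d → ℝ} (hμ : μ ∈ simplex d) (x : Fin d)
    {v : Fin d → ℝ} (hv : ∀ w, HasDmDerivAt F μ w x (v w)) : ∑ w, v w * μ w = δF μ x := by
  have h1 : ∀ w, v w * μ w = μ w * δF μ x - μ w * δF μ w := by
    intro w
    rcases (hμ.1 w).eq_or_lt with h0 | h0
    · simp [← h0]
    · rw [h.dm_eq hμ h0 (hv w)]; ring
  simp_rw [h1]
  rw [Finset.sum_sub_distrib, ← Finset.sum_mul, hμ.2, h.centred hμ]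
  ring

end Calculus

/-! ### The Kolmogorov vector field -/

section Kolmogorov

variable {d : ℕ} {α : (Fin d → ℝ) → Matrix (Fin d) (Fin d) ℝ}
  {δα : (Fin d → ℝ) → Fin d → Matrix (Fin d) (Fin d) ℝ}

/-- The matrix of the linearized Kolmogorov operator at `μ`: the vector field `μ ↦ μ α(μ)` has
derivative `q ↦ q A` in the zero-sum direction `q`. -/
def linMat (α : (Fin d → ℝ) → Matrix (Fin d) (Fin d) ℝ)
    (δα : (Fin d → ℝ) → Fin d → Matrix (Fin d) (Fin d) ℝ) (μ : Fin d → ℝ) :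
    Matrix (Fin d) (Fin d) ℝ :=
  Matrix.of fun x y => α μ x y + ∑ z, μ z * δα μ x z y

lemma sum_simplex_mul_le {μ : Fin d → ℝ} (hμ : μ ∈ simplex d) (f : Fin d → ℝ) {M : ℝ}
    (hf : ∀ z, |f z| ≤ M) : |∑ z, μ z * f z| ≤ M := by
  have h := sum_mul_le_mul_l1 f μ hf
  have e : l1 μ = 1 := by
    rw [← hμ.2]; exact Finset.sum_congr rfl fun z _ => abs_of_nonneg (hμ.1 z)
  rw [e, mul_one] at h
  simpa only [mul_comm] using h

/-- Uniform constants, over all the entries, for the estimates available for (D-Lip) rates. -/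
lemma DLipRate.exists_const (h : DLipRate α δα) : ∃ K : ℝ, 0 ≤ K ∧
    (∀ μ ∈ simplex d, ∀ ν ∈ simplex d, ∀ z y,
      |α ν z y - α μ z y - ∑ x, (ν - μ) x * δα μ x z y| ≤ K * l1 (ν - μ) ^ 2) ∧
    (∀ μ ∈ simplex d, ∀ ν ∈ simplex d, ∀ z y, |α μ z y - α ν z y| ≤ K * l1 (μ - ν)) ∧
    (∀ μ ∈ simplex d, ∀ ν ∈ simplex d, ∀ x z y, |δα μ x z y - δα ν x z y| ≤ K * l1 (μ - ν)) ∧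
    (∀ μ ∈ simplex d, ∀ x z y, |δα μ x z y| ≤ K) := by
  choose K₁ p₁ t₁ using fun z y => (h z y).taylor
  choose K₂ p₂ a₂ b₂ c₂ using fun z y => (h z y).exists_const
  have hle : ∀ z y, K₁ z y + K₂ z y ≤ ∑ z, ∑ y, (K₁ z y + K₂ z y) := fun z y =>
    (Finset.single_le_sum (f := fun y => K₁ z y + K₂ z y)
      (fun y _ => add_nonneg (p₁ z y) (p₂ z y)) (Finset.mem_univ y)).trans
    (Finset.single_le_sum (f := fun z => ∑ y, (K₁ z y + K₂ z y))
      (fun z _ => Finset.sum_nonneg fun y _ => add_nonneg (p₁ z y) (p₂ z y)) (Finset.mem_univ z))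
  refine ⟨∑ z, ∑ y, (K₁ z y + K₂ z y),
    Finset.sum_nonneg fun z _ => Finset.sum_nonneg fun y _ => add_nonneg (p₁ z y) (p₂ z y),
    ?_, ?_, ?_, ?_⟩
  · intro μ hμ ν hν z y
    exact (t₁ z y μ hμ ν hν).trans
      (mul_le_mul_of_nonneg_right (by linarith [hle z y, p₂ z y]) (sq_nonneg _))
  · intro μ hμ ν hν z y
    exact (a₂ z y μ hμ ν hν).trans
      (mul_le_mul_of_nonneg_right (by linarith [hle z y, p₁ z y]) (l1_nonneg _))
  · intro μ hμ ν hν x z y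
    exact (b₂ z y μ hμ ν hν x).trans
      (mul_le_mul_of_nonneg_right (by linarith [hle z y, p₁ z y]) (l1_nonneg _))
  · intro μ hμ x z y
    exact (c₂ z y μ hμ x).trans (by linarith [hle z y, p₁ z y])

lemma linMat_row (hα : IsRate d α) (h : DLipRate α δα) {μ : Fin d → ℝ} (hμ : μ ∈ simplex d)
    (x : Fin d) : ∑ y, linMat α δα μ x y = 0 := by
  -- The row sums of `α` vanish identically on the simplex, so their derivatives do too.
  have h0 : ∀ z, ∑ y, δα μ x z y = 0 := by
    intro z
    have h1 : Tendsto (fun ε : ℝ => ∑ y, (α ((1 - ε) • μ + ε • bvec x) z y - α μ z y) / ε)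
        (𝓝[>] 0) (𝓝 (∑ y, δα μ x z y)) :=
      tendsto_finsetSum _ fun y _ => (h z y).2.1 μ hμ x
    refine tendsto_nhds_unique h1 (tendsto_const_nhds.congr' ?_)
    filter_upwards [Ioo_mem_nhdsGT (one_pos (α := ℝ))] with ε hε
    rw [← Finset.sum_div, Finset.sum_sub_distrib, hα.2.2 μ hμ z,
      hα.2.2 _ (seg_mem hμ (bvec_mem x) hε.1.le hε.2.le) z]
    simp
  simp only [linMat, Matrix.of_apply]
  rw [Finset.sum_add_distrib, hα.2.2 μ hμ x, Finset.sum_comm, zero_add]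
  refine Finset.sum_eq_zero fun z _ => ?_
  rw [← Finset.mul_sum, h0, mul_zero]

lemma linMat_lip {K : ℝ}
    (h2 : ∀ μ ∈ simplex d, ∀ ν ∈ simplex d, ∀ z y, |α μ z y - α ν z y| ≤ K * l1 (μ - ν))
    (h3 : ∀ μ ∈ simplex d, ∀ ν ∈ simplex d, ∀ x z y,
      |δα μ x z y - δα ν x z y| ≤ K * l1 (μ - ν))
    (h4 : ∀ μ ∈ simplex d, ∀ x z y, |δα μ x z y| ≤ K)
    {μ ν : Fin d → ℝ} (hμ : μ ∈ simplex d) (hν : ν ∈ simplex d) (x y : Fin d) :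
    |linMat α δα μ x y - linMat α δα ν x y| ≤ 3 * K * l1 (μ - ν) := by
  have e : linMat α δα μ x y - linMat α δα ν x y = (α μ x y - α ν x y) +
      ∑ z, δα μ x z y * (μ - ν) z + ∑ z, ν z * (δα μ x z y - δα ν x z y) := by
    simp only [linMat, Matrix.of_apply]
    rw [add_assoc, ← Finset.sum_add_distrib, add_sub_add_comm, ← Finset.sum_sub_distrib]
    congr 1
    refine Finset.sum_congr rfl fun z _ => ?_
    simp only [Pi.sub_apply]; ring
  rw [e]
  have a1 := h2 μ hμ ν hν x y
  have a2 := sum_mul_le_mul_l1 (fun z => δα μ x z y) (μ - ν) (h4 μ hμ x · y)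
  have a3 := sum_simplex_mul_le hν _ (h3 μ hμ ν hν x · y)
  refine (abs_add_three _ _ _).trans ?_
  linarith

/-- The positivity condition bounds the off-diagonal entries of the linearization away from zero,
by compactness of the simplex. -/
lemma linMat_offdiag (h : DLipRate α δα)
    {Dα : (Fin d → ℝ) → Fin d → Fin d → Fin d → Fin d → ℝ}
    (hDα : ∀ μ ∈ simplex d, ∀ w x z y,
      HasDmDerivAt (fun ν => α ν z y) μ w x (Dα μ w x z y))
    (hcond : ∀ μ ∈ simplex d, ∀ x y, x ≠ y →
      -(α μ x y) < ∑ z, ∑ w, μ z * Dα μ w x z y * μ w) :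
    ∃ κ > 0, ∀ μ ∈ simplex d, ∀ x y, x ≠ y → κ ≤ linMat α δα μ x y := by
  obtain ⟨K, hK, -, h2, h3, h4⟩ := h.exists_const
  have hpos : ∀ μ ∈ simplex d, ∀ x y, x ≠ y → 0 < linMat α δα μ x y := by
    intro μ hμ x y hxy
    have h1 := hcond μ hμ x y hxy
    have e : ∑ z, ∑ w, μ z * Dα μ w x z y * μ w = ∑ z, μ z * δα μ x z y := by
      refine Finset.sum_congr rfl fun z _ => ?_
      rw [← (h z y).sum_dm_eq hμ x (v := fun w => Dα μ w x z y) (fun w => hDα μ hμ w x z y),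
        Finset.mul_sum]
      exact Finset.sum_congr rfl fun w _ => by ring
    rw [e] at h1
    simp only [linMat, Matrix.of_apply]
    linarith
  have hcont : ∀ x y, ContinuousOn (fun μ => linMat α δα μ x y) (simplex d) := by
    intro x y μ hμ
    rw [ContinuousWithinAt, tendsto_iff_dist_tendsto_zero]
    have hl : Tendsto (fun ν : Fin d → ℝ => 3 * K * l1 (ν - μ)) (𝓝[simplex d] μ) (𝓝 0) := by
      refine Tendsto.mono_left ?_ nhdsWithin_le_nhds
      have : Continuous fun ν : Fin d → ℝ => 3 * K * l1 (ν - μ) :=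
        continuous_const.mul (continuous_l1.comp (continuous_id.sub continuous_const))
      simpa using this.tendsto μ
    refine squeeze_zero' (Eventually.of_forall fun _ => dist_nonneg) ?_ hl
    filter_upwards [self_mem_nhdsWithin] with ν hν
    rw [Real.dist_eq]
    exact linMat_lip h2 h3 h4 hν hμ x y
  have hcomp : IsCompact (simplex d) := isCompact_stdSimplex ℝ (Fin d)
  have hex : ∀ p : Fin d × Fin d, ∃ κ > 0, p.1 ≠ p.2 →
      ∀ μ ∈ simplex d, κ ≤ linMat α δα μ p.1 p.2 := by
    intro p
    by_cases hp : p.1 = p.2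
    · exact ⟨1, one_pos, fun h => absurd hp h⟩
    · obtain ⟨μ₀, hμ₀, hmin⟩ :=
        hcomp.exists_isMinOn ⟨bvec p.1, bvec_mem p.1⟩ (hcont p.1 p.2)
      exact ⟨_, hpos μ₀ hμ₀ p.1 p.2 hp, fun _ μ hμ => hmin hμ⟩
  choose κ hκ0 hκ using hex
  rcases isEmpty_or_nonempty (Fin d × Fin d) with hE | hN
  · exact ⟨1, one_pos, fun μ _ x y => (hE.false (x, y)).elim⟩
  · obtain ⟨p₀, hp₀⟩ := Finite.exists_min κ
    exact ⟨κ p₀, hκ0 p₀, fun μ hμ x y hxy => (hp₀ (x, y)).trans (hκ (x, y) hxy μ hμ)⟩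

lemma kolmogorov_dissip (hα : IsRate d α) (h : DLipRate α δα)
    {Dα : (Fin d → ℝ) → Fin d → Fin d → Fin d → Fin d → ℝ}
    (hDα : ∀ μ ∈ simplex d, ∀ w x z y,
      HasDmDerivAt (fun ν => α ν z y) μ w x (Dα μ w x z y))
    (hcond : ∀ μ ∈ simplex d, ∀ x y, x ≠ y →
      -(α μ x y) < ∑ z, ∑ w, μ z * Dα μ w x z y * μ w) :
    ∃ C κ, DissipField (fun μ => Matrix.vecMul μ (α μ)) (linMat α δα) C κ := by
  obtain ⟨κ, hκ, hoff⟩ := linMat_offdiag h hDα hcond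
  obtain ⟨K, hK, h1, h2, h3, h4⟩ := h.exists_const
  -- An entrywise bound by `M` gives the bound `d * M` in ℓ¹.
  have hsum : ∀ (v : Fin d → ℝ) (M : ℝ), (∀ y, |v y| ≤ M) → l1 v ≤ d * M := by
    intro v M hM
    refine (Finset.sum_le_sum fun y _ => hM y).trans (le_of_eq ?_)
    simp
  refine ⟨d * (3 * K), κ, by positivity, hκ, ?_, ?_, hoff, fun μ hμ x => linMat_row hα h hμ x⟩
  · intro μ hμ ν hν
    rw [mul_assoc]
    refine hsum _ _ fun y => ?_
    have e : (Matrix.vecMul ν (α ν) - Matrix.vecMul μ (α μ) -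
        Matrix.vecMul (ν - μ) (linMat α δα μ)) y =
        ∑ z, (α ν z y - α μ z y) * (ν - μ) z +
        ∑ z, μ z * (α ν z y - α μ z y - ∑ x, (ν - μ) x * δα μ x z y) := by
      have e1 : ∑ x, (ν - μ) x * ∑ z, μ z * δα μ x z y =
          ∑ z, μ z * ∑ x, (ν - μ) x * δα μ x z y := by
        simp_rw [Finset.mul_sum]
        rw [Finset.sum_comm]
        exact Finset.sum_congr rfl fun z _ => Finset.sum_congr rfl fun x _ => by ring
      simp only [Pi.sub_apply, Matrix.vecMul, dotProduct, linMat, Matrix.of_apply, mul_add,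
        Finset.sum_add_distrib] at e1 ⊢
      rw [e1, ← Finset.sum_add_distrib, ← Finset.sum_sub_distrib, ← Finset.sum_sub_distrib,
        ← Finset.sum_add_distrib]
      exact Finset.sum_congr rfl fun z _ => by ring
    rw [e]
    have a1 := sum_mul_le_mul_l1 (fun z => α ν z y - α μ z y) (ν - μ) (h2 ν hν μ hμ · y)
    have a2 := sum_simplex_mul_le hμ _ (h1 μ hμ ν hν · y)
    refine (abs_add_le _ _).trans ?_
    nlinarith [mul_nonneg hK (sq_nonneg (l1 (ν - μ)))]
  · intro μ hμ ν hν q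
    rw [mul_assoc, mul_assoc]
    refine hsum _ _ fun y => ?_
    have e : (Matrix.vecMul q (linMat α δα μ) - Matrix.vecMul q (linMat α δα ν)) y =
        ∑ x, (linMat α δα μ x y - linMat α δα ν x y) * q x := by
      simp only [Pi.sub_apply, Matrix.vecMul, dotProduct, ← Finset.sum_sub_distrib]
      exact Finset.sum_congr rfl fun x _ => by ring
    rw [e]
    have := sum_mul_le_mul_l1 _ q (linMat_lip h2 h3 h4 hμ hν · y)
    linarith

end Kolmogorov

/-- If for all `x ≠ y` and `μ ∈ S_d` one has
`∑_{z,w} μ_z D^m_{wx} α_{zy}(μ) μ_w > -α_{xy}(μ)`, then `α` satisfies (Erg); in particular the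
nonlinear Markov chain is exponentially ergodic. -/
theorem erg_from_positivity_condition {d : ℕ} (hd : 1 < d)
    (α : (Fin d → ℝ) → Matrix (Fin d) (Fin d) ℝ)
    (δα : (Fin d → ℝ) → Fin d → Matrix (Fin d) (Fin d) ℝ)
    (hα : IsRate d α) (hαD : DLipRate α δα)
    (m : ℝ → (Fin d → ℝ) → Fin d → ℝ) (hm : IsFlow α m)
    (Dα : (Fin d → ℝ) → Fin d → Fin d → Fin d → Fin d → ℝ)
    (hDα : ∀ μ ∈ simplex d, ∀ w x z y,
      HasDmDerivAt (fun ν => α ν z y) μ w x (Dα μ w x z y))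
    (hcond : ∀ μ ∈ simplex d, ∀ x y, x ≠ y →
      -(α μ x y) < ∑ z, ∑ w, μ z * Dα μ w x z y * μ w) :
    ∃ (δm : ℝ → (Fin d → ℝ) → Fin d → Fin d → ℝ) (lam c₁ k₁ : ℝ),
      Erg m δm lam c₁ k₁ := by
  obtain ⟨C, κ, H⟩ := kolmogorov_dissip hα hαD hDα hcond
  exact H.erg (by omega) hm
end

section
/- For d = 2, let α : S_2 → ℝ^{2×2} be the transition rate function with α₁₂(μ) = 2μ₁² + μ₁ + 1, α₂₁(μ) = 30μ₁² − 19μ₁ + 4, α₁₁ = −α₁₂, α₂₂ = −α₂₁. Then ν_∞ = (1/2, 1/2) is the unique stationary distribution of the Kolmogorov equation, and for any initial condition μ ∈ S_2 with μ₁ ≠ 1/2, the first component of the solution is given explicitly by m₁(t; μ) = 1/2 + sgn(μ₁ − 1/2) / (2 √( 1/(1 − 2μ₁)² + 16 t )) for all t ≥ 0; in particular every solution converges to ν_∞, but only at rate 1/√t, not exponentially. -/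
/-!
On the simplex the drift of the first coordinate factors as `-32 (x - 1/2)³`, so the simplex point
`(1/2, 1/2)` is the only stationary distribution, and `u = m₁ - 1/2` solves `u' = -32 u³`.
The function `slowSol u₀ t = u₀ / √(1 + 64 u₀² t)` solves the same equation. Since `u ↦ -32 u³` is
decreasing, the squared distance of two solutions is nonincreasing (`cubic_ode_unique`), hence
`u = slowSol u₀`. The closed formula and the convergence follow; started from `(1, 0)`, the
`ℓ¹` distance to equilibrium is `1 / √(1 + 16 t)`, which no exponential `c e^{-λt}` dominates.
-/

open Finset Filter Topology

/-- The transition rate function of Example `slowConv` (d = 2). -/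
noncomputable def alphaSlow (μ : Fin 2 → ℝ) : Matrix (Fin 2) (Fin 2) ℝ :=
  Matrix.of ![![-(2 * μ 0 ^ 2 + μ 0 + 1), 2 * μ 0 ^ 2 + μ 0 + 1],
               ![30 * μ 0 ^ 2 - 19 * μ 0 + 4, -(30 * μ 0 ^ 2 - 19 * μ 0 + 4)]]

/-- The solution of `u' = -32 u³` with `u(0) = a`, in a form that also covers `a = 0`. -/
noncomputable def slowSol (a t : ℝ) : ℝ := a / Real.sqrt (1 + 64 * a ^ 2 * t)

lemma slowSol_hasDerivAt (a t : ℝ) (ht : 0 ≤ t) :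
    HasDerivAt (slowSol a) (-32 * slowSol a t ^ 3) t := by
  have hp : 0 < 1 + 64 * a ^ 2 * t := by positivity
  have hs : 0 < Real.sqrt (1 + 64 * a ^ 2 * t) := Real.sqrt_pos.2 hp
  have h1 : HasDerivAt (fun t : ℝ => 1 + 64 * a ^ 2 * t) (64 * a ^ 2) t := by
    simpa using ((hasDerivAt_id t).const_mul (64 * a ^ 2)).const_add 1
  have h2 := (hasDerivAt_const t a).div (h1.sqrt hp.ne') hs.ne'
  refine h2.congr_deriv ?_
  unfold slowSol
  field_simp
  ring

/-- Forward uniqueness for `u' = -32 u³`: by monotonicity of the cube, `(u - v)²` is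
nonincreasing, and it starts at `0`. -/
lemma cubic_ode_unique (u v : ℝ → ℝ) (h0 : u 0 = v 0)
    (hu : ∀ t, 0 ≤ t → HasDerivAt u (-32 * u t ^ 3) t)
    (hv : ∀ t, 0 ≤ t → HasDerivAt v (-32 * v t ^ 3) t) (t : ℝ) (ht : 0 ≤ t) : u t = v t := by
  have hD : ∀ s, 0 ≤ s → HasDerivAt (fun s => (u s - v s) ^ 2)
      (2 * (u s - v s) * (-32 * u s ^ 3 - -32 * v s ^ 3)) s := by
    intro s hs
    have h : HasDerivAt (fun s => (u s - v s) ^ 2) _ s := ((hu s hs).sub (hv s hs)).pow 2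
    refine h.congr_deriv ?_
    simp
  have hanti : AntitoneOn (fun s => (u s - v s) ^ 2) (Set.Ici 0) := by
    apply antitoneOn_of_deriv_nonpos (convex_Ici 0)
    · exact fun s hs => (hD s hs).continuousAt.continuousWithinAt
    · intro s hs
      rw [interior_Ici] at hs
      exact (hD s (le_of_lt hs)).differentiableAt.differentiableWithinAt
    · intro s hs
      rw [interior_Ici] at hs
      rw [(hD s (le_of_lt hs)).deriv]
      have e : 2 * (u s - v s) * (-32 * u s ^ 3 - -32 * v s ^ 3)
          = -(32 * (u s - v s) ^ 2 * (u s ^ 2 + v s ^ 2 + (u s + v s) ^ 2)) := by ring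
      rw [e]
      exact neg_nonpos.2 (by positivity)
  have h := hanti (Set.mem_Ici.2 le_rfl) (Set.mem_Ici.2 ht) ht
  simp only [h0, sub_self] at h
  have h' : (u t - v t) ^ 2 = 0 := le_antisymm (by simpa using h) (sq_nonneg _)
  exact sub_eq_zero.1 (pow_eq_zero_iff two_ne_zero |>.1 h')

lemma simplex_two_snd {μ : Fin 2 → ℝ} (hμ : μ ∈ simplex 2) : μ 1 = 1 - μ 0 := by
  have h := hμ.2
  rw [Fin.sum_univ_two] at h
  linarith

lemma drift_fst {μ : Fin 2 → ℝ} (hμ : μ ∈ simplex 2) :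
    Matrix.vecMul μ (alphaSlow μ) 0 = -32 * (μ 0 - 1 / 2) ^ 3 := by
  simp [Matrix.vecMul, dotProduct, Fin.sum_univ_two, alphaSlow, simplex_two_snd hμ]
  ring

lemma flow_fst {m : ℝ → (Fin 2 → ℝ) → Fin 2 → ℝ} (hm : IsFlow alphaSlow m)
    {μ : Fin 2 → ℝ} (hμ : μ ∈ simplex 2) (t : ℝ) (ht : 0 ≤ t) :
    m t μ 0 - 1 / 2 = slowSol (μ 0 - 1 / 2) t := by
  obtain ⟨h0, hmem, hder⟩ := hm μ hμ
  refine cubic_ode_unique (fun t => m t μ 0 - 1 / 2) (slowSol (μ 0 - 1 / 2)) ?_ ?_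
    (fun s hs => slowSol_hasDerivAt _ s hs) t ht
  · simp [slowSol, h0]
  · intro s hs
    have h := (hasDerivAt_pi.1 (hder s hs)) 0
    rw [drift_fst (hmem s hs)] at h
    exact h.sub_const _

lemma slowSol_eq_sign (x t : ℝ) (hx : x ≠ 1 / 2) (ht : 0 ≤ t) :
    slowSol (x - 1 / 2) t =
      Real.sign (x - 1 / 2) / (2 * Real.sqrt (1 / (1 - 2 * x) ^ 2 + 16 * t)) := by
  have ha : x - 1 / 2 ≠ 0 := sub_ne_zero.2 hx
  have e : 1 - 2 * x = -2 * (x - 1 / 2) := by ring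
  rw [e]
  generalize x - 1 / 2 = a at ha
  have hp : 0 < 1 + 64 * a ^ 2 * t := by positivity
  have hs : 0 < Real.sqrt (1 + 64 * a ^ 2 * t) := Real.sqrt_pos.2 hp
  have habs : 0 < |a| := abs_pos.2 ha
  have e2 : 1 / (-2 * a) ^ 2 + 16 * t = (1 + 64 * a ^ 2 * t) / (2 * |a|) ^ 2 := by
    rw [mul_pow, mul_pow, sq_abs]
    field_simp
    ring
  rw [e2, Real.sqrt_div hp.le, Real.sqrt_sq (by positivity), slowSol]
  rcases lt_or_gt_of_ne ha with h | h
  · rw [Real.sign_of_neg h, abs_of_neg h]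
    field_simp
  · rw [Real.sign_of_pos h, abs_of_pos h]
    field_simp

lemma slowSol_tendsto (a : ℝ) : Tendsto (slowSol a) atTop (𝓝 0) := by
  by_cases ha : a = 0
  · have : slowSol a = fun _ => 0 := by
      funext t
      simp [slowSol, ha]
    rw [this]
    exact tendsto_const_nhds
  · have hc : 0 < 64 * a ^ 2 := by positivity
    exact tendsto_const_nhds.div_atTop (Real.tendsto_sqrt_atTop.comp
      (tendsto_atTop_add_const_left _ _ (tendsto_id.const_mul_atTop hc)))

/-- `1 / √(1 + 16 t)` is not dominated by an exponential, since `e^x ≥ x² / 2`. -/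
lemma not_exp_bound (lam c : ℝ) (hl : 0 < lam)
    (h : ∀ t : ℝ, 0 ≤ t → 1 / Real.sqrt (1 + 16 * t) ≤ c * Real.exp (-lam * t)) : False := by
  have hc : 1 ≤ c := by simpa using h 0 le_rfl
  -- This `t` satisfies `lam² t / 2 > 17 c`, while `1 + 16 t ≤ 17 t`.
  obtain ⟨t, ht⟩ : ∃ t, t = 1 + 34 * c / lam ^ 2 := ⟨_, rfl⟩
  have ht1 : 1 ≤ t := by
    have : 0 ≤ 34 * c / lam ^ 2 := by positivity
    linarith
  have hlt : lam ^ 2 * t = lam ^ 2 + 34 * c := by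
    rw [ht]
    field_simp
  have hb := h t (by linarith)
  have hs : 0 < Real.sqrt (1 + 16 * t) := Real.sqrt_pos.2 (by linarith)
  have hsle : Real.sqrt (1 + 16 * t) ≤ 17 * t := by
    rw [Real.sqrt_le_left (by linarith)]
    nlinarith
  have hq := Real.quadratic_le_exp_of_nonneg (x := lam * t) (by positivity)
  have hexp : Real.exp (lam * t) ≤ c * Real.sqrt (1 + 16 * t) := by
    rw [neg_mul, Real.exp_neg, ← div_eq_mul_inv,
      div_le_div_iff₀ hs (Real.exp_pos _), one_mul] at hb
    exact hb
  have h1 : Real.exp (lam * t) ≤ c * (17 * t) :=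
    hexp.trans (mul_le_mul_of_nonneg_left hsle (by linarith))
  have h2 : (lam * t) ^ 2 = (lam ^ 2 + 34 * c) * t := by
    rw [← hlt]
    ring
  have h3 : 0 < lam * t := by positivity
  have h4 : 0 < lam ^ 2 * t := by positivity
  nlinarith

/-- For the example rates `α₁₂(μ) = 2μ₁² + μ₁ + 1`,
`α₂₁(μ) = 30μ₁² - 19μ₁ + 4`: `ν_∞ = (1/2,1/2)` is the unique stationary distribution, the
first component of the flow is given by the explicit formula
`m₁(t;μ) = 1/2 + sgn(μ₁ - 1/2) / (2 √(1/(1-2μ₁)² + 16 t))` for `μ₁ ≠ 1/2`; every solution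
converges to `ν_∞`, but the convergence is not exponential. -/
theorem slow_convergence_example :
    Matrix.vecMul ![(1:ℝ)/2, 1/2] (alphaSlow ![(1:ℝ)/2, 1/2]) = 0 ∧
    (∀ μ ∈ simplex 2, Matrix.vecMul μ (alphaSlow μ) = 0 → μ = ![(1:ℝ)/2, 1/2]) ∧
    (∀ m : ℝ → (Fin 2 → ℝ) → Fin 2 → ℝ, IsFlow alphaSlow m →
      (∀ μ ∈ simplex 2, μ 0 ≠ 1/2 → ∀ t : ℝ, 0 ≤ t →
        m t μ 0 = 1/2 + Real.sign (μ 0 - 1/2) /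
          (2 * Real.sqrt (1 / (1 - 2 * μ 0) ^ 2 + 16 * t))) ∧
      (∀ μ ∈ simplex 2,
        Filter.Tendsto (fun t => m t μ) Filter.atTop (nhds ![(1:ℝ)/2, 1/2])) ∧
      ¬ ∃ lam : ℝ, 0 < lam ∧ ∃ c : ℝ, ∀ μ ∈ simplex 2, ∀ t : ℝ, 0 ≤ t →
          l1 (m t μ - ![(1:ℝ)/2, 1/2]) ≤
            c * Real.exp (-lam * t) * l1 (μ - ![(1:ℝ)/2, 1/2])) := by
  refine ⟨?_, ?_, ?_⟩
  · ext i
    fin_cases i <;>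
      norm_num [Matrix.vecMul, dotProduct, Fin.sum_univ_two, alphaSlow]
  · intro μ hμ h
    have h0 := congrFun h 0
    rw [drift_fst hμ] at h0
    have h1 : μ 0 - 1 / 2 = 0 := by simpa using h0
    have h2 := simplex_two_snd hμ
    ext i
    fin_cases i
    · change μ 0 = 1 / 2
      linarith
    · change μ 1 = 1 / 2
      linarith
  · intro m hm
    refine ⟨?_, ?_, ?_⟩
    · intro μ hμ hne t ht
      rw [← slowSol_eq_sign _ _ hne ht, ← flow_fst hm hμ t ht]
      ring
    · intro μ hμ
      have h0 : Tendsto (fun t => m t μ 0) atTop (𝓝 (1 / 2)) := by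
        have h := (slowSol_tendsto (μ 0 - 1 / 2)).add_const (1 / 2)
        rw [zero_add] at h
        refine h.congr' ?_
        filter_upwards [eventually_ge_atTop 0] with t ht
        rw [← flow_fst hm hμ t ht]
        ring
      rw [tendsto_pi_nhds]
      intro i
      fin_cases i
      · exact h0
      · change Tendsto (fun t => m t μ 1) atTop (𝓝 (1 / 2))
        have h := h0.const_sub 1
        rw [show (1 : ℝ) - 1 / 2 = 1 / 2 by norm_num] at h
        refine h.congr' ?_
        filter_upwards [eventually_ge_atTop 0] with t ht
        exact (simplex_two_snd ((hm μ hμ).2.1 t ht)).symm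
    · rintro ⟨lam, hl, c, h⟩
      have hμ : (![1, 0] : Fin 2 → ℝ) ∈ simplex 2 := by
        refine ⟨fun z => ?_, by simp⟩
        fin_cases z <;> simp
      refine not_exp_bound lam c hl fun t ht => ?_
      have hb := h _ hμ t ht
      have h0 := flow_fst hm hμ t ht
      have h1 := simplex_two_snd ((hm _ hμ).2.1 t ht)
      have hl1 : l1 ((![1, 0] : Fin 2 → ℝ) - ![(1:ℝ)/2, 1/2]) = 1 := by
        norm_num [l1, Fin.sum_univ_two]
      rw [hl1, mul_one] at hb
      refine le_trans (le_of_eq ?_) hb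
      have hpos : 0 ≤ slowSol (1 / 2) t := by
        unfold slowSol
        positivity
      have h0' : m t ![1, 0] 0 - 1 / 2 = slowSol (1 / 2) t := by
        rw [h0]
        norm_num
      have h1' : m t ![1, 0] 1 - 1 / 2 = -slowSol (1 / 2) t := by
        rw [h1, ← h0']
        ring
      change _ = ∑ z, |_|
      rw [Fin.sum_univ_two]
      change _ = |m t ![1, 0] 0 - 1 / 2| + |m t ![1, 0] 1 - 1 / 2|
      rw [h0', h1', abs_neg, abs_of_nonneg hpos, slowSol]
      norm_num
      ring
end
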